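/- Let η > 0, let t ∈ (η, 1 − 4η], set s = t − η, and let x be a real number with 0 < x ≤ 1.1·η^{1/2}. Then ∫₀^{1.1·η^{1/2}} (φ_η(y − x) − φ_η(y + x)) · (Φ̃_{1−t}(y)/Φ̃_{1−s}(x)) dy ≤ 3/4. -/

import Mathlib

open MeasureTheory

/-- `φ_v(x) = (2πv)^{-1/2} exp(-x²/(2v))`, the centered Gaussian density of variance `v`. -/
noncomputable def gaussDensity (v x : ℝ) : ℝ :=
  (Real.sqrt (2 * Real.pi * v))⁻¹ * Real.exp (-x ^ 2 / (2 * v))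

/-- `Φ̃_v(x) = ∫₀^x φ_v(w) dw`. -/
noncomputable def gaussPartialCDF (v x : ℝ) : ℝ :=
  ∫ w in (0 : ℝ)..x, gaussDensity v w

/-!
Since `1 - exp (-z) ≤ z`, the difference `φ_v(y - x) - φ_v(y + x)` is at most
`φ_v(y - x) · 2xy/v`, and by monotonicity of the density, `x φ_v(x) ≤ Φ̃_v(x) ≤ x φ_v(0)` for
`x ≥ 0`. The factor `x` therefore cancels in the transition density of the meander, and what is left
of the dependence on `x` is `φ_u(y) φ_v(y - x) / φ_{u+v}(x)`. This is the density at `y` of a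
Brownian bridge at an intermediate time: a Gaussian of variance `uv/(u + v)`, whose maximum does not
depend on `x`. Integrating the resulting multiple of `y²` gives a bound which is uniform in `x > 0`.
-/

lemma continuous_gaussDensity (v : ℝ) : Continuous (gaussDensity v) := by
  unfold gaussDensity
  fun_prop

lemma gaussDensity_nonneg (v x : ℝ) : 0 ≤ gaussDensity v x := by
  unfold gaussDensity
  positivity

lemma gaussDensity_pos {v : ℝ} (hv : 0 < v) (x : ℝ) : 0 < gaussDensity v x := by
  unfold gaussDensity
  positivity

lemma gaussDensity_zero_right (v : ℝ) : gaussDensity v 0 = (√(2 * Real.pi * v))⁻¹ := by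
  simp [gaussDensity]

lemma gaussDensity_eq_zero_right_mul_exp (v x : ℝ) :
    gaussDensity v x = gaussDensity v 0 * Real.exp (-(x ^ 2 / (2 * v))) := by
  rw [gaussDensity_zero_right, gaussDensity, neg_div]

lemma gaussDensity_le_of_abs_le {v x y : ℝ} (hv : 0 ≤ v) (hxy : |x| ≤ |y|) :
    gaussDensity v y ≤ gaussDensity v x := by
  have hsq : x ^ 2 ≤ y ^ 2 := sq_le_sq.mpr hxy
  unfold gaussDensity
  gcongr

lemma gaussDensity_le_zero_right {v : ℝ} (hv : 0 ≤ v) (x : ℝ) :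
    gaussDensity v x ≤ gaussDensity v 0 :=
  gaussDensity_le_of_abs_le hv (by simp)

lemma gaussDensity_zero_right_anti {v w : ℝ} (hv : 0 < v) (hvw : v ≤ w) :
    gaussDensity w 0 ≤ gaussDensity v 0 := by
  rw [gaussDensity_zero_right, gaussDensity_zero_right]
  gcongr

lemma gaussDensity_sub_gaussDensity_add_le {v : ℝ} (hv : v ≠ 0) (x y : ℝ) :
    gaussDensity v (y - x) - gaussDensity v (y + x) ≤ gaussDensity v (y - x) * (2 * x * y / v) := by
  have add_eq : gaussDensity v (y + x) =
      gaussDensity v (y - x) * Real.exp (-(2 * x * y / v)) := by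
    have exponent_eq : -(y + x) ^ 2 / (2 * v) = -(y - x) ^ 2 / (2 * v) + -(2 * x * y / v) := by
      field_simp
      ring
    rw [gaussDensity, gaussDensity, exponent_eq, Real.exp_add, ← mul_assoc]
  rw [add_eq, ← mul_one_sub]
  gcongr
  · exact gaussDensity_nonneg v _
  · linarith [Real.one_sub_le_exp_neg (2 * x * y / v)]

/-- Conditioning a Brownian path from `0` on its value `x` at time `u + v`: the joint density of `x`
and the value `y` at time `u` is the density of `x` times that of the Brownian bridge from `0`
to `x`. -/
lemma gaussDensity_mul_gaussDensity_sub {u v : ℝ} (hu : 0 < u) (hv : 0 < v) (x y : ℝ) :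
    gaussDensity u y * gaussDensity v (y - x) =
      gaussDensity (u + v) x * gaussDensity (u * v / (u + v)) (y - u * x / (u + v)) := by
  have variance_mul_eq : 2 * Real.pi * u * (2 * Real.pi * v) =
      2 * Real.pi * (u + v) * (2 * Real.pi * (u * v / (u + v))) := by
    field_simp
  have exponent_add_eq : -y ^ 2 / (2 * u) + -(y - x) ^ 2 / (2 * v) =
      -x ^ 2 / (2 * (u + v)) + -(y - u * x / (u + v)) ^ 2 / (2 * (u * v / (u + v))) := by
    field_simp
    ring
  simp only [gaussDensity]
  rw [mul_mul_mul_comm, mul_mul_mul_comm (√(2 * Real.pi * (u + v)))⁻¹, ← mul_inv, ← mul_inv,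
    ← Real.sqrt_mul (by positivity), ← Real.sqrt_mul (by positivity), variance_mul_eq,
    ← Real.exp_add, ← Real.exp_add, exponent_add_eq]

lemma gaussDensity_mul_gaussDensity_sub_le {u v : ℝ} (hu : 0 < u) (hv : 0 < v) (x y : ℝ) :
    gaussDensity u y * gaussDensity v (y - x) ≤
      gaussDensity (u + v) x * gaussDensity (u * v / (u + v)) 0 := by
  rw [gaussDensity_mul_gaussDensity_sub hu hv]
  exact mul_le_mul_of_nonneg_left (gaussDensity_le_zero_right (by positivity) _)
    (gaussDensity_nonneg _ _)

lemma continuous_gaussPartialCDF (v : ℝ) : Continuous (gaussPartialCDF v) :=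
  intervalIntegral.continuous_primitive
    (fun _ _ => (continuous_gaussDensity v).intervalIntegrable _ _) 0

lemma gaussPartialCDF_nonneg (v : ℝ) {x : ℝ} (hx : 0 ≤ x) : 0 ≤ gaussPartialCDF v x :=
  intervalIntegral.integral_nonneg hx fun w _ => gaussDensity_nonneg v w

lemma gaussPartialCDF_le_mul {v x : ℝ} (hv : 0 ≤ v) (hx : 0 ≤ x) :
    gaussPartialCDF v x ≤ x * gaussDensity v 0 := by
  calc gaussPartialCDF v x ≤ ∫ _ in (0 : ℝ)..x, gaussDensity v 0 :=
        intervalIntegral.integral_mono_on hx ((continuous_gaussDensity v).intervalIntegrable _ _)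
          intervalIntegrable_const fun w _ => gaussDensity_le_zero_right hv w
    _ = x * gaussDensity v 0 := by simp

lemma mul_le_gaussPartialCDF {v x : ℝ} (hv : 0 ≤ v) (hx : 0 ≤ x) :
    x * gaussDensity v x ≤ gaussPartialCDF v x := by
  calc x * gaussDensity v x = ∫ _ in (0 : ℝ)..x, gaussDensity v x := by simp
    _ ≤ gaussPartialCDF v x :=
        intervalIntegral.integral_mono_on hx intervalIntegrable_const
          ((continuous_gaussDensity v).intervalIntegrable _ _)
          fun w hw => gaussDensity_le_of_abs_le hv (abs_le_abs_of_nonneg hw.1 hw.2)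

/-- The density at `y` of Brownian motion started at `x`, after a time step `v`, conditioned to stay
positive up to time `u + v`. For the standard Brownian meander this is the transition density from
`x` at time `1 - u - v` to `y` at time `1 - u`. -/
noncomputable def meanderDensity (u v x y : ℝ) : ℝ :=
  (gaussDensity v (y - x) - gaussDensity v (y + x)) *
    (gaussPartialCDF u y / gaussPartialCDF (u + v) x)

lemma continuous_meanderDensity (u v x : ℝ) : Continuous (meanderDensity u v x) := by
  have hφ := continuous_gaussDensity v
  have hΦ := continuous_gaussPartialCDF u
  unfold meanderDensity
  fun_prop

lemma meanderDensity_le {u v x y : ℝ} (hu : 0 < u) (hv : 0 < v) (hx : 0 < x) (hy : 0 ≤ y) :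
    meanderDensity u v x y ≤
      gaussDensity (u * v / (u + v)) 0 * Real.exp (y ^ 2 / (2 * u)) * (2 * y ^ 2 / v) := by
  have hφ : 0 < gaussDensity (u + v) x := gaussDensity_pos (by positivity) x
  have ratio_le : gaussPartialCDF u y / gaussPartialCDF (u + v) x ≤
      (y * gaussDensity u 0) / (x * gaussDensity (u + v) x) :=
    div_le_div₀ (mul_nonneg hy (gaussDensity_nonneg u 0)) (gaussPartialCDF_le_mul hu.le hy)
      (by positivity) (mul_le_gaussPartialCDF (by positivity) hx.le)
  have bridge_le : gaussDensity u y * gaussDensity v (y - x) / gaussDensity (u + v) x ≤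
      gaussDensity (u * v / (u + v)) 0 := by
    rw [div_le_iff₀' hφ]
    exact gaussDensity_mul_gaussDensity_sub_le hu hv x y
  have zero_right_eq : gaussDensity u 0 = gaussDensity u y * Real.exp (y ^ 2 / (2 * u)) := by
    rw [gaussDensity_eq_zero_right_mul_exp u y, mul_assoc, ← Real.exp_add, neg_add_cancel,
      Real.exp_zero, mul_one]
  calc meanderDensity u v x y
      ≤ gaussDensity v (y - x) * (2 * x * y / v) *
          ((y * gaussDensity u 0) / (x * gaussDensity (u + v) x)) :=
        mul_le_mul (gaussDensity_sub_gaussDensity_add_le hv.ne' x y) ratio_le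
          (div_nonneg (gaussPartialCDF_nonneg u hy) (gaussPartialCDF_nonneg _ hx.le))
          (mul_nonneg (gaussDensity_nonneg v _) (by positivity))
    _ = gaussDensity u y * gaussDensity v (y - x) / gaussDensity (u + v) x *
          Real.exp (y ^ 2 / (2 * u)) * (2 * y ^ 2 / v) := by
        rw [zero_right_eq]
        field_simp
    _ ≤ gaussDensity (u * v / (u + v)) 0 * Real.exp (y ^ 2 / (2 * u)) * (2 * y ^ 2 / v) := by
        gcongr

lemma integral_meanderDensity_le {u v x b : ℝ} (hu : 0 < u) (hv : 0 < v) (hx : 0 < x)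
    (hb : 0 ≤ b) :
    ∫ y in (0 : ℝ)..b, meanderDensity u v x y ≤
      gaussDensity (u * v / (u + v)) 0 * Real.exp (b ^ 2 / (2 * u)) * (2 * b ^ 3 / (3 * v)) := by
  set C := gaussDensity (u * v / (u + v)) 0 * Real.exp (b ^ 2 / (2 * u))
  calc ∫ y in (0 : ℝ)..b, meanderDensity u v x y
      ≤ ∫ y in (0 : ℝ)..b, C * (2 / v) * y ^ 2 := by
        refine intervalIntegral.integral_mono_on hb
          ((continuous_meanderDensity u v x).intervalIntegrable _ _)
          (Continuous.intervalIntegrable (by fun_prop) _ _) fun y hy => ?_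
        have exp_le : Real.exp (y ^ 2 / (2 * u)) ≤ Real.exp (b ^ 2 / (2 * u)) := by
          have := hy.1
          have := hy.2
          gcongr
        calc meanderDensity u v x y
            ≤ gaussDensity (u * v / (u + v)) 0 * Real.exp (y ^ 2 / (2 * u)) * (2 * y ^ 2 / v) :=
              meanderDensity_le hu hv hx hy.1
          _ ≤ C * (2 * y ^ 2 / v) := by
              have := mul_le_mul_of_nonneg_left exp_le (gaussDensity_nonneg (u * v / (u + v)) 0)
              gcongr
          _ = C * (2 / v) * y ^ 2 := by ring
    _ = C * (2 * b ^ 3 / (3 * v)) := by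
        rw [intervalIntegral.integral_const_mul, integral_pow]
        push_cast
        field_simp
        ring

lemma gaussDensity_bridge_zero_right_le {u v : ℝ} (hv : 0 < v) (huv : 4 * v ≤ u) :
    gaussDensity (u * v / (u + v)) 0 ≤ (2 * √v)⁻¹ := by
  have hu : 0 < u := by linarith
  have variance_ge : 4 / 5 * v ≤ u * v / (u + v) := by
    rw [le_div_iff₀ (by positivity)]
    nlinarith
  calc gaussDensity (u * v / (u + v)) 0 ≤ gaussDensity (4 / 5 * v) 0 :=
        gaussDensity_zero_right_anti (by positivity) variance_ge
    _ ≤ (2 * √v)⁻¹ := by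
        rw [gaussDensity_zero_right]
        gcongr
        apply Real.le_sqrt_of_sq_le
        rw [mul_pow, Real.sq_sqrt hv.le]
        nlinarith [Real.pi_gt_three]

theorem stmt_7_general (η t x : ℝ) (hη : 0 < η) (ht : t ≤ 1 - 4 * η) (hx : 0 < x) :
    (∫ y in (0 : ℝ)..(1.1 * Real.sqrt η),
        (gaussDensity η (y - x) - gaussDensity η (y + x)) *
          (gaussPartialCDF (1 - t) y / gaussPartialCDF (1 - (t - η)) x))
      ≤ 3 / 4 := by
  have hu : 0 < 1 - t := by linarith
  have sq_sqrt : √η ^ 2 = η := Real.sq_sqrt hη.le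
  have exp_le : Real.exp ((1.1 * √η) ^ 2 / (2 * (1 - t))) ≤ 3 / 2 := by
    have exponent_le : (1.1 * √η) ^ 2 / (2 * (1 - t)) ≤ 1 / 3 := by
      rw [div_le_iff₀ (by positivity), mul_pow, sq_sqrt]
      linarith
    calc Real.exp ((1.1 * √η) ^ 2 / (2 * (1 - t))) ≤ Real.exp (1 / 3) := by gcongr
      _ ≤ 1 / (1 - 1 / 3) := Real.exp_bound_div_one_sub_of_interval (by norm_num) (by norm_num)
      _ = 3 / 2 := by norm_num
  simp only [← sub_add]
  calc ∫ y in (0 : ℝ)..(1.1 * √η), meanderDensity (1 - t) η x y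
      ≤ gaussDensity ((1 - t) * η / (1 - t + η)) 0 *
          Real.exp ((1.1 * √η) ^ 2 / (2 * (1 - t))) * (2 * (1.1 * √η) ^ 3 / (3 * η)) :=
        integral_meanderDensity_le hu hη hx (by positivity)
    _ ≤ (2 * √η)⁻¹ * (3 / 2) * (2 * (1.1 * √η) ^ 3 / (3 * η)) := by
        gcongr
        exact gaussDensity_bridge_zero_right_le hη (by linarith)
    _ = 1.1 ^ 3 / 2 := by
        field_simp
        rw [sq_sqrt]
    _ ≤ 3 / 4 := by norm_num

/-- Let `η > 0`, `t ∈ (η, 1 - 4η]`, `s = t - η`, and `0 < x ≤ 1.1 η^{1/2}`. Then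
`∫₀^{1.1 √η} (φ_η(y - x) - φ_η(y + x)) · Φ̃_{1-t}(y)/Φ̃_{1-s}(x) dy ≤ 3/4`; i.e. the standard
Brownian meander, at value `x` at time `t - η`, lies below `1.1 η^{1/2}` at time `t` with
probability at most `3/4`. -/
theorem stmt_7 (η t x : ℝ) (hη : 0 < η) (ht1 : η < t) (ht2 : t ≤ 1 - 4 * η)
    (hx0 : 0 < x) (hx : x ≤ 1.1 * Real.sqrt η) :
    (∫ y in (0 : ℝ)..(1.1 * Real.sqrt η),
        (gaussDensity η (y - x) - gaussDensity η (y + x)) *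
          (gaussPartialCDF (1 - t) y / gaussPartialCDF (1 - (t - η)) x))
      ≤ 3 / 4 :=
  stmt_7_general η t x hη ht2 hx0
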